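/- Let k ≥ 1 and let g : ℝ → ℝ be (k+1)-times continuously differentiable such that g and all of its derivatives up to order k+1 have at most polynomial growth. Then the function φ_g is k-times differentiable on (−1,1) and its k-th derivative is given by φ_g^{(k)}(ρ) = ∫∫ g^{(k)}(x) g^{(k)}(ρx + √(1−ρ²) y) dγ(x) dγ(y) for every ρ ∈ (−1,1). -/

import Mathlib

open MeasureTheory ProbabilityTheory

/-- `h` has at most polynomial growth. -/
def PolyGrowth (h : ℝ → ℝ) : Prop :=
  ∃ C > (0 : ℝ), ∃ m : ℕ, ∀ x : ℝ, |h x| ≤ C * (1 + |x|) ^ m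

/-- The correlation functional `φ_g`. -/
noncomputable def phiCorr (g : ℝ → ℝ) (ρ : ℝ) : ℝ :=
  ∫ x, ∫ y, g x * g (ρ * x + Real.sqrt (1 - ρ ^ 2) * y)
    ∂(gaussianReal 0 1) ∂(gaussianReal 0 1)

open Filter Topology

/-- Polynomial growth in two variables. -/
def PG2 (F : ℝ × ℝ → ℝ) : Prop :=
  ∃ C > (0 : ℝ), ∃ m : ℕ, ∀ p : ℝ × ℝ, |F p| ≤ C * ((1 + |p.1|) * (1 + |p.2|)) ^ m

lemma PG2.mul {F G : ℝ × ℝ → ℝ} (hF : PG2 F) (hG : PG2 G) : PG2 (fun p => F p * G p) := by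
  obtain ⟨C, hC, m, h⟩ := hF
  obtain ⟨D, hD, n, h'⟩ := hG
  refine ⟨C * D, by positivity, m + n, fun p => ?_⟩
  rw [abs_mul, pow_add]
  calc |F p| * |G p| ≤ (C * ((1 + |p.1|) * (1 + |p.2|)) ^ m) * (D * ((1 + |p.1|) * (1 + |p.2|)) ^ n) :=
        mul_le_mul (h p) (h' p) (abs_nonneg _) (by positivity)
    _ = _ := by ring

lemma pg2_lin (a b : ℝ) : PG2 (fun p => a * p.1 + b * p.2) := by
  refine ⟨1 + |a| + |b|, by positivity, 1, fun p => ?_⟩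
  have h1 : |a * p.1 + b * p.2| ≤ |a| * |p.1| + |b| * |p.2| := by
    rw [← abs_mul, ← abs_mul]; exact abs_add_le _ _
  have := abs_nonneg a
  have := abs_nonneg b
  have := abs_nonneg p.1
  have := abs_nonneg p.2
  have e : (1 + |a| + |b|) * ((1 + |p.1|) * (1 + |p.2|)) ^ 1 - (|a| * |p.1| + |b| * |p.2|)
      = (1 + |p.1|) * (1 + |p.2|) + |a| * (1 + |p.2| + |p.1| * |p.2|)
        + |b| * (1 + |p.1| + |p.1| * |p.2|) := by ring
  have : 0 ≤ (1 + |p.1|) * (1 + |p.2|) + |a| * (1 + |p.2| + |p.1| * |p.2|)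
        + |b| * (1 + |p.1| + |p.1| * |p.2|) := by positivity
  linarith

lemma PolyGrowth.comp_pg2 {f : ℝ → ℝ} (hf : PolyGrowth f) {L : ℝ × ℝ → ℝ} (hL : PG2 L) :
    PG2 (fun p => f (L p)) := by
  obtain ⟨C, hC, m, h⟩ := hf
  obtain ⟨D, hD, n, h'⟩ := hL
  refine ⟨C * (1 + D) ^ m, by positivity, n * m, fun p => (h _).trans ?_⟩
  rw [pow_mul, mul_assoc, ← mul_pow]
  gcongr
  have h1 : 1 ≤ ((1 + |p.1|) * (1 + |p.2|)) ^ n := by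
    apply one_le_pow₀
    nlinarith [abs_nonneg p.1, abs_nonneg p.2]
  nlinarith [h' p]

lemma PolyGrowth.integrable_gauss {f : ℝ → ℝ} (hf : PolyGrowth f) (hc : Continuous f) :
    Integrable f (gaussianReal 0 1) := by
  obtain ⟨C, hC, m, h⟩ := hf
  have h1 : MemLp (fun x : ℝ => 1 + |x|) (m : ENNReal) (gaussianReal 0 1) :=
    MemLp.add (f := fun _ : ℝ => (1 : ℝ)) (g := fun x : ℝ => |x|) (memLp_const 1)
      (MemLp.abs (f := fun x : ℝ => x) (memLp_id_gaussianReal' (m : ENNReal) (by simp)))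
  have h2 : Integrable (fun x : ℝ => ‖1 + |x|‖ ^ m) (gaussianReal 0 1) :=
    h1.integrable_norm_pow'
  refine (h2.const_mul C).mono' hc.aestronglyMeasurable (ae_of_all _ fun x => ?_)
  simp only [Real.norm_eq_abs]
  rw [abs_of_nonneg (a := 1 + |x|) (by positivity)]
  exact h x

lemma integrable_weight (m : ℕ) :
    Integrable (fun p : ℝ × ℝ => ((1 + |p.1|) * (1 + |p.2|)) ^ m)
      ((gaussianReal 0 1).prod (gaussianReal 0 1)) := by
  have h : Integrable (fun x : ℝ => (1 + |x|) ^ m) (gaussianReal 0 1) := by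
    refine PolyGrowth.integrable_gauss ⟨1, one_pos, m, fun x => ?_⟩ (by fun_prop)
    rw [abs_of_nonneg (by positivity), one_mul]
  simpa only [mul_pow] using h.mul_prod h

lemma PG2.integrable {F : ℝ × ℝ → ℝ} (hF : PG2 F) (hc : Continuous F) :
    Integrable F ((gaussianReal 0 1).prod (gaussianReal 0 1)) := by
  obtain ⟨C, hC, m, h⟩ := hF
  exact ((integrable_weight m).const_mul C).mono' hc.aestronglyMeasurable
    (ae_of_all _ fun p => h p)

lemma PG2.slice_left {F : ℝ × ℝ → ℝ} (hF : PG2 F) (hc : Continuous F) (y : ℝ) :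
    Integrable (fun x => F (x, y)) (gaussianReal 0 1) := by
  obtain ⟨C, hC, m, h⟩ := hF
  refine PolyGrowth.integrable_gauss ⟨C * (1 + |y|) ^ m, by positivity, m, fun x => ?_⟩
    (by fun_prop)
  refine (h (x, y)).trans (le_of_eq ?_)
  rw [mul_pow]; ring

lemma PG2.slice_right {F : ℝ × ℝ → ℝ} (hF : PG2 F) (hc : Continuous F) (x : ℝ) :
    Integrable (fun y => F (x, y)) (gaussianReal 0 1) := by
  obtain ⟨C, hC, m, h⟩ := hF
  refine PolyGrowth.integrable_gauss ⟨C * (1 + |x|) ^ m, by positivity, m, fun y => ?_⟩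
    (by fun_prop)
  refine (h (x, y)).trans (le_of_eq ?_)
  rw [mul_pow]; ring

lemma integrable_gauss_iff {h : ℝ → ℝ} :
    Integrable h (gaussianReal 0 1) ↔ Integrable (fun x => h x * gaussianPDFReal 0 1 x) := by
  rw [gaussianReal_of_var_ne_zero 0 one_ne_zero,
    integrable_withDensity_iff (measurable_gaussianPDF _ _) (ae_of_all _ fun _ => gaussianPDF_lt_top)]
  simp only [toReal_gaussianPDF]

lemma hasDerivAt_pdf (x : ℝ) :
    HasDerivAt (gaussianPDFReal 0 1) (-(x * gaussianPDFReal 0 1 x)) x := by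
  rw [gaussianPDFReal_def]
  have h : HasDerivAt (fun x : ℝ => -(x - 0) ^ 2 / (2 * ((1 : NNReal) : ℝ))) (-x) x := by
    have := ((((hasDerivAt_id' x).sub_const 0).fun_pow 2).fun_neg).div_const
      (2 * ((1 : NNReal) : ℝ))
    refine this.congr_deriv ?_
    simp
    ring
  have := h.exp.const_mul (√(2 * Real.pi * ((1 : NNReal) : ℝ)))⁻¹
  refine this.congr_deriv ?_
  ring

lemma stein {h h' : ℝ → ℝ} (hd : ∀ x, HasDerivAt h (h' x) x)
    (h0 : Integrable h (gaussianReal 0 1)) (h1 : Integrable h' (gaussianReal 0 1))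
    (h2 : Integrable (fun x => x * h x) (gaussianReal 0 1)) :
    ∫ x, x * h x ∂(gaussianReal 0 1) = ∫ x, h' x ∂(gaussianReal 0 1) := by
  rw [integral_gaussianReal_eq_integral_smul one_ne_zero,
    integral_gaussianReal_eq_integral_smul one_ne_zero]
  rw [integrable_gauss_iff] at h0 h1 h2
  have key := integral_mul_deriv_eq_deriv_mul_of_integrable (u := h) (u' := h')
    (v := gaussianPDFReal 0 1) (v' := fun x => -(x * gaussianPDFReal 0 1 x))
    (fun x _ => hd x) (fun x _ => hasDerivAt_pdf x)
    (by
      refine h2.neg.congr (ae_of_all _ fun x => ?_)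
      simp only [Pi.neg_apply, Pi.mul_apply]; ring) h1 h0
  have e : ∫ x, h x * -(x * gaussianPDFReal 0 1 x) = - ∫ x, gaussianPDFReal 0 1 x • (x * h x) := by
    rw [← integral_neg]
    congr 1; ext x; simp only [smul_eq_mul]; ring
  rw [e, neg_inj] at key
  rw [key]
  congr 1; ext x; simp only [smul_eq_mul]; ring

lemma core {f f' f'' : ℝ → ℝ} (hf : ∀ x, HasDerivAt f (f' x) x)
    (hf' : ∀ x, HasDerivAt f' (f'' x) x) (hc'' : Continuous f'')
    (g0 : PolyGrowth f) (g1 : PolyGrowth f') (g2 : PolyGrowth f'')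
    {ρ : ℝ} (hρ : ρ ∈ Set.Ioo (-1 : ℝ) 1) :
    HasDerivAt (phiCorr f) (phiCorr f' ρ) ρ := by
  have hc : Continuous f := continuous_iff_continuousAt.2 fun x => (hf x).continuousAt
  have hc' : Continuous f' := continuous_iff_continuousAt.2 fun x => (hf' x).continuousAt
  have gfst : PG2 (fun p => p.1) := by simpa using pg2_lin 1 0
  have gsnd : PG2 (fun p => p.2) := by simpa using pg2_lin 0 1
  have gf := g0.comp_pg2 gfst
  have gf' := g1.comp_pg2 gfst
  have hphi : ∀ u : ℝ → ℝ, PolyGrowth u → Continuous u → ∀ t, phiCorr u t =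
      ∫ p : ℝ × ℝ, u p.1 * u (t * p.1 + √(1 - t ^ 2) * p.2)
        ∂((gaussianReal 0 1).prod (gaussianReal 0 1)) := by
    intro u gu cu t
    rw [integral_prod _ (((gu.comp_pg2 gfst).mul
      (gu.comp_pg2 (pg2_lin t √(1 - t ^ 2)))).integrable (by fun_prop))]
    rfl
  rw [hphi f' g1 hc', funext (hphi f g0 hc)]
  set γ2 := (gaussianReal 0 1).prod (gaussianReal 0 1) with hγ2
  have habs : |ρ| < 1 := abs_lt.2 hρ
  -- the neighbourhood
  obtain ⟨r, hr0, hr1⟩ := exists_between habs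
  have hrpos : 0 < r := (abs_nonneg ρ).trans_lt hr0
  have hsr : 0 < 1 - r ^ 2 := by nlinarith
  have hnb : Set.Ioo (-r) r ∈ 𝓝 ρ := Ioo_mem_nhds (abs_lt.1 hr0).1 (abs_lt.1 hr0).2
  have hpos : ∀ t ∈ Set.Ioo (-r) r, 1 - r ^ 2 ≤ 1 - t ^ 2 := by
    intro t ht
    nlinarith [ht.1, ht.2]
  obtain ⟨C0, hC0, m0, h0⟩ := gf
  obtain ⟨C1, hC1, m1, h1⟩ := g1
  set K := 1 / √(1 - r ^ 2) with hK
  have hKpos : 0 < K := by have := Real.sqrt_pos.2 hsr; positivity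
  have hder := hasDerivAt_integral_of_dominated_loc_of_deriv_le (μ := γ2) (𝕜 := ℝ) (x₀ := ρ) hnb
    (F := fun t p => f p.1 * f (t * p.1 + √(1 - t ^ 2) * p.2))
    (F' := fun t p => f p.1 * (f' (t * p.1 + √(1 - t ^ 2) * p.2) *
      (p.1 + (-t / √(1 - t ^ 2)) * p.2)))
    (bound := fun p => (C0 * C1 * (1 + K)) * ((1 + |p.1|) * (1 + |p.2|)) ^ (m0 + m1 + 1))
    (Eventually.of_forall fun t => Continuous.aestronglyMeasurable (by fun_prop))
    (((g0.comp_pg2 gfst).mul (g0.comp_pg2 (pg2_lin ρ √(1 - ρ ^ 2)))).integrable (by fun_prop))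
    (Continuous.aestronglyMeasurable (by fun_prop))
    (ae_of_all _ fun p t ht => ?_) ((integrable_weight _).const_mul _)
    (ae_of_all _ fun p t ht => ?_)
  · refine hder.2.congr_deriv ?_
    have g1 : PolyGrowth f' := ⟨C1, hC1, m1, h1⟩
    have gf : PG2 (fun p => f p.1) := ⟨C0, hC0, m0, h0⟩
    have hs : 0 < √(1 - ρ ^ 2) := Real.sqrt_pos.2 (hsr.trans_le (hpos ρ (abs_lt.1 hr0)))
    generalize √(1 - ρ ^ 2) = s at hs
    clear hder h0 h1
    have gz := pg2_lin ρ s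
    have G1 : PG2 (fun p => f p.1 * f' (ρ * p.1 + s * p.2)) := gf.mul (g1.comp_pg2 gz)
    have G2 : PG2 (fun p => f' p.1 * f' (ρ * p.1 + s * p.2)) := gf'.mul (g1.comp_pg2 gz)
    have G3 : PG2 (fun p => f p.1 * f'' (ρ * p.1 + s * p.2)) := gf.mul (g2.comp_pg2 gz)
    have G4 := gfst.mul G1
    have G5 := gsnd.mul G1
    have I2 := G2.integrable (by fun_prop)
    have I3 := G3.integrable (by fun_prop)
    have I4 := G4.integrable (by fun_prop)
    have I5 := G5.integrable (by fun_prop)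
    have A : ∫ p, p.1 * (f p.1 * f' (ρ * p.1 + s * p.2)) ∂γ2
        = ∫ p, f' p.1 * f' (ρ * p.1 + s * p.2) + ρ * (f p.1 * f'' (ρ * p.1 + s * p.2)) ∂γ2 := by
      have I6 : Integrable (fun p : ℝ × ℝ => f' p.1 * f' (ρ * p.1 + s * p.2)
          + ρ * (f p.1 * f'' (ρ * p.1 + s * p.2))) γ2 := I2.add (I3.const_mul ρ)
      rw [hγ2, integral_prod_symm _ I4, integral_prod_symm _ I6]
      congr 1; ext y
      refine stein (h := fun x => f x * f' (ρ * x + s * y)) (fun x => ?_)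
        (G1.slice_left (by fun_prop) y)
        ((G2.slice_left (by fun_prop) y).add ((G3.slice_left (by fun_prop) y).const_mul ρ))
        (G4.slice_left (by fun_prop) y)
      have hl : HasDerivAt (fun x => ρ * x + s * y) ρ x := by
        simpa using ((hasDerivAt_id x).const_mul ρ).add_const (s * y)
      have := (hf x).mul ((hf' _).comp x hl)
      refine this.congr_deriv ?_
      simp only [Function.comp]; ring
    have B : ∫ p, p.2 * (f p.1 * f' (ρ * p.1 + s * p.2)) ∂γ2
        = ∫ p, s * (f p.1 * f'' (ρ * p.1 + s * p.2)) ∂γ2 := by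
      rw [hγ2, integral_prod _ I5, integral_prod _ (I3.const_mul s)]
      congr 1; ext x
      refine stein (h := fun y => f x * f' (ρ * x + s * y)) (fun y => ?_)
        (G1.slice_right (by fun_prop) x)
        ((G3.slice_right (by fun_prop) x).const_mul s)
        (G5.slice_right (by fun_prop) x)
      have hl : HasDerivAt (fun y => ρ * x + s * y) s y := by
        simpa using ((hasDerivAt_id y).const_mul s).const_add (ρ * x)
      have := ((hf' _).comp y hl).const_mul (f x)
      refine this.congr_deriv ?_
      ring
    have E : ∫ p, f p.1 * (f' (ρ * p.1 + s * p.2) * (p.1 + (-ρ / s) * p.2)) ∂γ2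
        = ∫ p, p.1 * (f p.1 * f' (ρ * p.1 + s * p.2)) ∂γ2
          + (-ρ / s) * ∫ p, p.2 * (f p.1 * f' (ρ * p.1 + s * p.2)) ∂γ2 := by
      rw [← integral_const_mul, ← integral_add I4 (I5.const_mul _)]
      congr 1; ext p; ring
    rw [E, A, B, integral_add I2 (I3.const_mul _), integral_const_mul, integral_const_mul]
    field_simp
    ring
  · -- bound
    have hs1 := hpos t ht
    have hs : 0 < 1 - t ^ 2 := hsr.trans_le hs1
    have hsq : 0 < √(1 - t ^ 2) := Real.sqrt_pos.2 hs
    have hsq1 : √(1 - t ^ 2) ≤ 1 := Real.sqrt_le_one.2 (by nlinarith [sq_nonneg t])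
    have ht1 : |t| ≤ 1 := (abs_lt.2 ht).le.trans hr1.le
    have hx := abs_nonneg p.1
    have hy := abs_nonneg p.2
    have hcoef : |-t / √(1 - t ^ 2)| ≤ K := by
      rw [abs_div, abs_neg, abs_of_pos hsq, hK]
      have : 0 < √(1 - r ^ 2) := Real.sqrt_pos.2 hsr
      have := Real.sqrt_le_sqrt hs1
      gcongr
    have b1 : |f' (t * p.1 + √(1 - t ^ 2) * p.2)| ≤ C1 * ((1 + |p.1|) * (1 + |p.2|)) ^ m1 := by
      refine (h1 _).trans ?_
      gcongr
      have : |t * p.1 + √(1 - t ^ 2) * p.2| ≤ |t| * |p.1| + √(1 - t ^ 2) * |p.2| := by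
        rw [← abs_mul, ← abs_of_pos hsq, ← abs_mul, abs_of_pos hsq]; exact abs_add_le _ _
      nlinarith [mul_nonneg hx hy]
    have b2 : |p.1 + (-t / √(1 - t ^ 2)) * p.2| ≤ (1 + K) * ((1 + |p.1|) * (1 + |p.2|)) := by
      have : |p.1 + (-t / √(1 - t ^ 2)) * p.2| ≤ |p.1| + |-t / √(1 - t ^ 2)| * |p.2| := by
        rw [← abs_mul]; exact abs_add_le _ _
      have h3 := mul_le_mul_of_nonneg_right hcoef hy
      have h4 : 0 ≤ 1 + |p.2| + |p.1| * |p.2| + K * (1 + |p.1| + |p.1| * |p.2|) := by positivity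
      nlinarith
    rw [Real.norm_eq_abs, abs_mul, abs_mul]
    calc _ ≤ (C0 * ((1 + |p.1|) * (1 + |p.2|)) ^ m0) * ((C1 * ((1 + |p.1|) * (1 + |p.2|)) ^ m1) *
          ((1 + K) * ((1 + |p.1|) * (1 + |p.2|)))) := by
          gcongr
          exact h0 p
      _ = _ := by rw [pow_add, pow_add]; ring
  · have hs : 0 < 1 - t ^ 2 := hsr.trans_le (hpos t ht)
    have hq : HasDerivAt (fun t : ℝ => √(1 - t ^ 2)) (-t / √(1 - t ^ 2)) t := by
      have := (((hasDerivAt_id' t).fun_pow 2).const_sub 1).sqrt (by simpa using hs.ne')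
      refine this.congr_deriv ?_
      have := (Real.sqrt_pos.2 hs).ne'
      simp
      field_simp
    have hl := ((hasDerivAt_id t).mul_const p.1).add (hq.mul_const p.2)
    have := ((hf _).comp t hl).const_mul (f p.1)
    refine this.congr_deriv ?_
    simp

theorem phiCorr_iteratedDeriv (k : ℕ) (hk : 1 ≤ k) (g : ℝ → ℝ)
    (hg : ContDiff ℝ (k + 1 : ℕ) g)
    (hgrowth : ∀ i ≤ k + 1, PolyGrowth (iteratedDeriv i g)) :
    (∀ ρ ∈ Set.Ioo (-1 : ℝ) 1, ∀ i < k, DifferentiableAt ℝ (iteratedDeriv i (phiCorr g)) ρ) ∧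
    (∀ ρ ∈ Set.Ioo (-1 : ℝ) 1,
      iteratedDeriv k (phiCorr g) ρ =
        ∫ x, ∫ y, iteratedDeriv k g x * iteratedDeriv k g (ρ * x + Real.sqrt (1 - ρ ^ 2) * y)
          ∂(gaussianReal 0 1) ∂(gaussianReal 0 1)) := by
  have hd : ∀ i, i < k + 1 → ∀ x, HasDerivAt (iteratedDeriv i g) (iteratedDeriv (i + 1) g x) x := by
    intro i hi x
    rw [iteratedDeriv_succ]
    exact (hg.differentiable_iteratedDeriv i (by exact_mod_cast hi) x).hasDerivAt
  have step : ∀ i < k, ∀ ρ ∈ Set.Ioo (-1 : ℝ) 1,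
      HasDerivAt (phiCorr (iteratedDeriv i g)) (phiCorr (iteratedDeriv (i + 1) g) ρ) ρ := by
    intro i hi ρ hρ
    exact core (hd i (by omega)) (hd (i + 1) (by omega))
      (hg.continuous_iteratedDeriv (i + 2) (by exact_mod_cast (by omega : i + 2 ≤ k + 1)))
      (hgrowth i (by omega)) (hgrowth (i + 1) (by omega)) (hgrowth (i + 2) (by omega)) hρ
  have main : ∀ i ≤ k, ∀ ρ ∈ Set.Ioo (-1 : ℝ) 1,
      iteratedDeriv i (phiCorr g) ρ = phiCorr (iteratedDeriv i g) ρ := by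
    intro i
    induction i with
    | zero => intro _ ρ _; simp
    | succ i ih =>
      intro hi ρ hρ
      have he : iteratedDeriv i (phiCorr g) =ᶠ[𝓝 ρ] phiCorr (iteratedDeriv i g) := by
        filter_upwards [isOpen_Ioo.mem_nhds hρ] with t ht using ih (by omega) t ht
      rw [iteratedDeriv_succ, he.deriv_eq]
      exact (step i (by omega) ρ hρ).deriv
  refine ⟨fun ρ hρ i hi => ?_, fun ρ hρ => main k le_rfl ρ hρ⟩
  have he : iteratedDeriv i (phiCorr g) =ᶠ[𝓝 ρ] phiCorr (iteratedDeriv i g) := by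
    filter_upwards [isOpen_Ioo.mem_nhds hρ] with t ht using main i hi.le t ht
  exact he.symm.differentiableAt_iff.1 (step i hi ρ hρ).differentiableAt
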